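/- Let N ≥ 3, let -N < β < 0, and let p, q > 1 satisfy N/(p+1) + (N - |β|)/(q+1) > N - 2 and p > N/((N-1)q - 1). Set r = (q+1)/q. Then there exists α₀ > 0 such that for every α ≥ α₀, S^rad_{α,β} > S_{α,β}; in particular, for α ≥ α₀ no radially symmetric member of 𝒟 attains the infimum S_{α,β}, so the ground state is not radially symmetric. -/

import Mathlib

open MeasureTheory Metric Set Filter

noncomputable section

abbrev E (N : ℕ) := EuclideanSpace ℝ (Fin N)

/-- The Laplacian: sum of pure second partial derivatives. -/
def lap {N : ℕ} (u : E N → ℝ) (x : E N) : ℝ :=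
  ∑ i, fderiv ℝ (fun y => fderiv ℝ u y (EuclideanSpace.single i 1)) x (EuclideanSpace.single i 1)
/-- The admissible class 𝒟: C² functions on the closed unit ball, vanishing on the
boundary sphere, not identically zero. -/
def memD {N : ℕ} (u : E N → ℝ) : Prop :=
  ContDiffOn ℝ 2 u (closedBall 0 1) ∧
  (∀ x : E N, ‖x‖ = 1 → u x = 0) ∧
  ∃ x ∈ closedBall (0 : E N) 1, u x ≠ 0

/-- A function is radial if its value depends only on the norm. -/
def radial {N : ℕ} (u : E N → ℝ) : Prop := ∀ x y : E N, ‖x‖ = ‖y‖ → u x = u y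

/-- The weighted second-order Rayleigh quotient
R(u) = (∫_B |x|^{-β(r-1)} |Δu|^r) / (∫_B |x|^α |u|^{p+1})^{r/(p+1)}. -/
def ray2 {N : ℕ} (α β p r : ℝ) (u : E N → ℝ) : ℝ :=
  (∫ x in ball (0 : E N) 1, ‖x‖ ^ (-β * (r - 1)) * |lap u x| ^ r) /
    (∫ x in ball (0 : E N) 1, ‖x‖ ^ α * |u x| ^ (p + 1)) ^ (r / (p + 1))

/-- The ground-state level S_{α,β}. -/
def S2 (N : ℕ) (α β p r : ℝ) : ℝ :=
  sInf {c | ∃ u : E N → ℝ, memD u ∧ ray2 α β p r u = c}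

/-- The radial ground-state level S^rad_{α,β}. -/
def S2rad (N : ℕ) (α β p r : ℝ) : ℝ :=
  sInf {c | ∃ u : E N → ℝ, memD u ∧ radial u ∧ ray2 α β p r u = c}
lemma lap_ext {N : ℕ} {u : E N → ℝ} (hu : ContDiffOn ℝ 2 u (closedBall 0 1)) :
    ∃ G : E N → ℝ, ContinuousOn G (closedBall 0 1) ∧ ∀ x ∈ ball (0 : E N) 1, lap u x = G x := by
  have hK : UniqueDiffOn ℝ (closedBall (0 : E N) 1) := by
    apply uniqueDiffOn_convex (convex_closedBall _ _)
    rw [interior_closedBall _ one_ne_zero]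
    exact ⟨0, by simp⟩
  have h1 : ContDiffOn ℝ 1 (fderivWithin ℝ u (closedBall 0 1)) (closedBall 0 1) :=
    hu.fderivWithin hK (by norm_num)
  refine ⟨fun x => ∑ i, fderivWithin ℝ (fun y => fderivWithin ℝ u (closedBall 0 1) y
    (EuclideanSpace.single i 1)) (closedBall 0 1) x (EuclideanSpace.single i 1), ?_, ?_⟩
  · apply continuousOn_finsetSum
    intro i _
    have h2 : ContDiffOn ℝ 1 (fun y => fderivWithin ℝ u (closedBall 0 1) y
      (EuclideanSpace.single i 1)) (closedBall 0 1) := h1.clm_apply contDiffOn_const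
    exact (h2.continuousOn_fderivWithin hK le_rfl).clm_apply continuousOn_const
  · intro x hx
    unfold lap
    refine Finset.sum_congr rfl fun i _ => ?_
    have hn : ∀ y ∈ ball (0 : E N) 1, closedBall (0 : E N) 1 ∈ nhds y := fun y hy =>
      Filter.mem_of_superset (isOpen_ball.mem_nhds hy) ball_subset_closedBall
    rw [fderivWithin_of_mem_nhds (hn x hx)]
    congr 1
    apply Filter.EventuallyEq.fderiv_eq
    filter_upwards [isOpen_ball.mem_nhds hx] with y hy
    rw [fderivWithin_of_mem_nhds (hn y hy)]

lemma norm_hasFDerivAt {N : ℕ} {x : E N} (hx : x ≠ 0) :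
    HasFDerivAt (fun y : E N => ‖y‖) ((1 / ‖x‖) • innerSL ℝ x) x := by
  have h := (hasStrictFDerivAt_norm_sq x).hasFDerivAt
  have hx' : ‖x‖ ≠ 0 := norm_ne_zero_iff.2 hx
  have h2 := h.sqrt (by positivity)
  simp only [Real.sqrt_sq (norm_nonneg _)] at h2
  refine h2.congr_fderiv ?_
  ext y
  simp
  field_simp

/-- radial ODE facts -/
lemma radial_ode {N : ℕ} (hN : 3 ≤ N) {u : E N → ℝ} (hu : ContDiffOn ℝ 2 u (closedBall 0 1))
    (hr : radial u) {e : E N} (he : ‖e‖ = 1) :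
    ContDiffOn ℝ 2 (fun t : ℝ => u (t • e)) (Ioo (-1) 1) ∧
    (∀ x ∈ ball (0 : E N) 1, x ≠ 0 → lap u x = lap u (‖x‖ • e)) ∧
    (∀ t ∈ Ioo (0:ℝ) 1, HasDerivAt (fun t => t ^ (N-1) * deriv (fun t : ℝ => u (t • e)) t)
      (t ^ (N-1) * lap u (t • e)) t) := by
  set w : ℝ → ℝ := fun t => u (t • e) with hw
  have hwc : ContDiffOn ℝ 2 w (Ioo (-1) 1) := by
    apply hu.comp (t := closedBall 0 1) (f := fun t : ℝ => t • e)
    · exact (contDiff_id.smul contDiff_const).contDiffOn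
    · intro t ht
      simp [norm_smul, he, abs_le]
      exact ⟨ht.1.le, ht.2.le⟩
  have hwd : ∀ t ∈ Ioo (0:ℝ) 1, HasDerivAt w (deriv w t) t := by
    intro t ht
    have : ContDiffAt ℝ 2 w t := hwc.contDiffAt (Ioo_mem_nhds (by linarith [ht.1]) ht.2)
    exact (this.differentiableAt (by norm_num)).hasDerivAt
  have hwd2 : ContDiffOn ℝ 1 (deriv w) (Ioo (-1) 1) := hwc.deriv_of_isOpen isOpen_Ioo (by norm_num)
  have hwdd : ∀ t ∈ Ioo (0:ℝ) 1, HasDerivAt (deriv w) (deriv (deriv w) t) t := by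
    intro t ht
    have : ContDiffAt ℝ 1 (deriv w) t := hwd2.contDiffAt (Ioo_mem_nhds (by linarith [ht.1]) ht.2)
    exact (this.differentiableAt (by norm_num)).hasDerivAt
  have huw : u = fun y => w ‖y‖ := by
    ext y
    exact hr _ _ (by simp [norm_smul, he])
  have hfd : ∀ y ∈ ball (0 : E N) 1, y ≠ 0 → ∀ i, fderiv ℝ u y (EuclideanSpace.single i 1)
      = deriv w ‖y‖ / ‖y‖ * y i := by
    intro y hy hy0 i
    have hy1 : ‖y‖ ∈ Ioo (0:ℝ) 1 := ⟨norm_pos_iff.2 hy0, by simpa using hy⟩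
    have h := (hwd _ hy1).comp_hasFDerivAt y (norm_hasFDerivAt hy0)
    have h' : HasFDerivAt u (deriv w ‖y‖ • (1 / ‖y‖) • innerSL ℝ y) y := by
      rw [huw]; exact h
    rw [h'.fderiv]
    simp [EuclideanSpace.inner_single_right]
    ring
  have hlap : ∀ x ∈ ball (0 : E N) 1, x ≠ 0 → lap u x =
      deriv (deriv w) ‖x‖ + (N - 1) * deriv w ‖x‖ / ‖x‖ := by
    intro x hx hx0
    have hx1 : ‖x‖ ∈ Ioo (0:ℝ) 1 := ⟨norm_pos_iff.2 hx0, by simpa using hx⟩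
    have hxn : ‖x‖ ≠ 0 := hx1.1.ne'
    have key : ∀ i, fderiv ℝ (fun y => fderiv ℝ u y (EuclideanSpace.single i 1)) x
        (EuclideanSpace.single i 1) = (deriv (deriv w) ‖x‖ * ‖x‖ - deriv w ‖x‖) / ‖x‖ ^ 3 * (x i) ^ 2
          + deriv w ‖x‖ / ‖x‖ := by
      intro i
      have e1 : (fun y => fderiv ℝ u y (EuclideanSpace.single i 1)) =ᶠ[nhds x]
          (fun y => (deriv w ‖y‖ / ‖y‖) * y i) := by
        filter_upwards [isOpen_ball.mem_nhds hx, isOpen_ne.mem_nhds hx0] with y h1 h2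
        exact hfd y h1 h2 i
      rw [e1.fderiv_eq]
      have h1 := ((hwdd _ hx1).div (hasDerivAt_id _) hxn).comp_hasFDerivAt x (norm_hasFDerivAt hx0)
      have h2 : HasFDerivAt (fun y : E N => y i) (EuclideanSpace.proj i : E N →L[ℝ] ℝ) x :=
        (EuclideanSpace.proj i : E N →L[ℝ] ℝ).hasFDerivAt
      have h3 := h1.mul h2
      have h4 : HasFDerivAt (fun y : E N => (deriv w ‖y‖ / ‖y‖) * y i) _ x := h3
      rw [h4.fderiv]
      simp [EuclideanSpace.inner_single_right]
      field_simp
      ring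
    unfold lap
    rw [Finset.sum_congr rfl fun i _ => key i, Finset.sum_add_distrib, ← Finset.mul_sum,
      ← EuclideanSpace.real_norm_sq_eq]
    simp
    field_simp
    ring
  refine ⟨hwc, ?_, ?_⟩
  · intro x hx hx0
    rw [hlap x hx hx0, hlap (‖x‖ • e)]
    · simp [norm_smul, he]
    · simpa [norm_smul, he] using hx
    · intro h
      have := congrArg norm h
      simp [norm_smul, he] at this
      exact hx0 this
  · intro t ht
    have ht0 := ht.1
    have hn : ‖t • e‖ = t := by simp [norm_smul, he, abs_of_pos ht.1]
    rw [hlap (t • e) (by simpa [hn] using ht.2) (by rw [← norm_pos_iff, hn]; exact ht.1), hn]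
    have := ((hasDerivAt_pow (N-1) t).mul (hwdd t ht))
    refine HasDerivAt.congr_deriv this ?_
    obtain ⟨M, rfl⟩ : ∃ M, N = M + 2 := ⟨N - 2, by omega⟩
    have : M + 2 - 1 = M + 1 := rfl
    rw [this]
    simp only [Nat.add_sub_cancel]
    push_cast
    field_simp
    ring

lemma polar {N : ℕ} (hN : 3 ≤ N) (f : ℝ → ℝ) :
    ∫ x in ball (0 : E N) 1, f ‖x‖ =
      (N * volume.real (ball (0 : E N) 1)) * ∫ s in Ioo (0:ℝ) 1, s ^ (N-1) * f s := by
  have : Nontrivial (E N) := by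
    have : NeZero N := ⟨by omega⟩
    infer_instance
  have h := integral_fun_norm_addHaar (volume : Measure (E N)) (fun s => (Iio (1:ℝ)).indicator f s)
  have e1 : (fun x : E N => (Iio (1:ℝ)).indicator f ‖x‖) = (ball (0 : E N) 1).indicator (fun x => f ‖x‖) := by
    ext x
    simp [indicator]
  rw [e1, integral_indicator measurableSet_ball] at h
  rw [h]
  have e2 : (fun y : ℝ => y ^ (Module.finrank ℝ (E N) - 1) • (Iio (1:ℝ)).indicator f y) =
     (Iio (1:ℝ)).indicator (fun y => y ^ (N-1) * f y) := by
    ext y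
    simp [indicator]
  rw [e2, setIntegral_indicator measurableSet_Iio, Ioi_inter_Iio]
  simp [mul_assoc]
lemma holder1 {N : ℕ} (hN : 3 ≤ N) {b q r : ℝ} (hb0 : 0 < b) (hbN : b < N) (hq : 1 < q)
    (hr : r = (q + 1) / q) {F : ℝ → ℝ} (hF : ContinuousOn F (Icc 0 1)) :
    ∫ s in Ioo (0:ℝ) 1, s ^ (N-1) * |F s| ≤
      (∫ s in Ioo (0:ℝ) 1, s ^ (N-1) * (s ^ (b * (r - 1)) * |F s| ^ r)) ^ (1 / r) *
      (∫ s in Ioo (0:ℝ) 1, s ^ ((N:ℝ) - 1 - b)) ^ (1 / (q + 1)) := by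
  have hN' : (3:ℝ) ≤ N := by exact_mod_cast hN
  have hq0 : 0 < q := by linarith
  have hr0 : 0 < r := by rw [hr]; positivity
  have hr1 : r - 1 = 1 / q := by rw [hr]; field_simp; ring
  have hcast : ((N - 1 : ℕ) : ℝ) = (N:ℝ) - 1 := by
    rw [Nat.cast_sub (by omega)]; simp
  have hpq : r.HolderConjugate (q + 1) := by
    rw [Real.holderConjugate_iff]
    refine ⟨by have : 0 < 1 / q := by positivity
               linarith, ?_⟩
    rw [hr]; field_simp
  have e1 : 0 ≤ ((N:ℝ) - 1 + b * (r - 1)) / r := by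
    rw [hr1]
    have : 0 ≤ b * (1 / q) := by positivity
    apply div_nonneg _ hr0.le
    linarith
  have hfc : ContinuousOn (fun s : ℝ => s ^ (((N:ℝ) - 1 + b * (r - 1)) / r) * |F s|) (Icc 0 1) :=
    (continuousOn_id.rpow_const (fun _ _ => Or.inr e1)).mul hF.abs
  obtain ⟨M, hM⟩ := isCompact_Icc.exists_bound_of_continuousOn hfc
  have h := integral_mul_le_Lp_mul_Lq_of_nonneg (μ := volume.restrict (Ioo (0:ℝ) 1))
    (f := fun s : ℝ => s ^ (((N:ℝ) - 1 + b * (r - 1)) / r) * |F s|)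
    (g := fun s : ℝ => s ^ (((N:ℝ) - 1 - b) / (q + 1))) hpq ?_ ?_ ?_ ?_
  · refine le_trans (le_of_eq ?_) (h.trans (le_of_eq ?_))
    · refine setIntegral_congr_fun measurableSet_Ioo fun s hs => ?_
      have : s ^ (N - 1) = s ^ (((N:ℝ) - 1 + b * (r - 1)) / r) * s ^ (((N:ℝ) - 1 - b) / (q + 1)) := by
        rw [← Real.rpow_add hs.1, ← Real.rpow_natCast, hcast]
        congr 1
        rw [hr1, hr]
        field_simp
        ring
      simp only [this]
      ring
    · congr 2
      · refine setIntegral_congr_fun measurableSet_Ioo fun s hs => ?_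
        have h0 := hs.1
        rw [Real.mul_rpow (by positivity) (abs_nonneg _), ← Real.rpow_mul h0.le,
          div_mul_cancel₀ _ hr0.ne', Real.rpow_add h0, ← hcast, Real.rpow_natCast, mul_assoc]
      · refine setIntegral_congr_fun measurableSet_Ioo fun s hs => ?_
        have h0 := hs.1
        rw [← Real.rpow_mul h0.le, div_mul_cancel₀ _ (by positivity)]
  · filter_upwards [ae_restrict_mem measurableSet_Ioo] with s hs
    have h0 := hs.1
    simp only [Pi.zero_apply]; positivity
  · filter_upwards [ae_restrict_mem measurableSet_Ioo] with s hs
    have h0 := hs.1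
    simp only [Pi.zero_apply]; positivity
  · apply MemLp.of_bound ((hfc.mono Ioo_subset_Icc_self).aestronglyMeasurable measurableSet_Ioo) M
    filter_upwards [ae_restrict_mem measurableSet_Ioo] with s hs
    exact hM s (Ioo_subset_Icc_self hs)
  · have hm : AEStronglyMeasurable (fun s : ℝ => s ^ (((N:ℝ) - 1 - b) / (q + 1)))
        (volume.restrict (Ioo (0:ℝ) 1)) := by
      apply Measurable.aestronglyMeasurable
      fun_prop
    rw [← integrable_norm_rpow_iff hm (by simp; linarith) (by simp)]
    rw [ENNReal.toReal_ofReal (by positivity)]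
    have : IntegrableOn (fun s : ℝ => s ^ ((N:ℝ) - 1 - b)) (Ioo 0 1) := by
      rw [intervalIntegral.integrableOn_Ioo_rpow_iff one_pos]; linarith
    refine IntegrableOn.congr_fun this (fun s hs => ?_) measurableSet_Ioo
    have h0 := hs.1
    rw [Real.norm_of_nonneg (by positivity), ← Real.rpow_mul h0.le, div_mul_cancel₀ _ (by positivity)]

/-- pointwise bound for radial functions -/
lemma radial_bound {N : ℕ} (hN : 3 ≤ N) {b q r : ℝ} (hb0 : 0 < b) (hbN : b < N) (hq : 1 < q)
    (hr : r = (q + 1) / q) : ∃ C : ℝ, 0 < C ∧ ∀ u : E N → ℝ, memD u → radial u →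
      ∀ x ∈ ball (0 : E N) 1, x ≠ 0 → |u x| * ‖x‖ ^ (N - 1) ≤
        C * (∫ x in ball (0 : E N) 1, ‖x‖ ^ (b * (r - 1)) * |lap u x| ^ r) ^ (1 / r) * (1 - ‖x‖) := by
  have hr0 : 0 < r := by rw [hr]; positivity
  have hV : 0 < N * volume.real (ball (0 : E N) 1) := by
    have : 0 < volume.real (ball (0 : E N) 1) := by
      rw [measureReal_def]
      exact ENNReal.toReal_pos (measure_ball_pos _ _ one_pos).ne' measure_ball_lt_top.ne
    have : 0 < (N:ℝ) := by positivity
    positivity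
  set V := N * volume.real (ball (0 : E N) 1) with hVdef
  refine ⟨(1 / V) ^ (1 / r) * ((∫ s in Ioo (0:ℝ) 1, s ^ ((N:ℝ) - 1 - b)) ^ (1 / (q + 1)) + 1), ?_, ?_⟩
  · have : 0 ≤ ∫ s in Ioo (0:ℝ) 1, s ^ ((N:ℝ) - 1 - b) :=
      setIntegral_nonneg measurableSet_Ioo fun s hs => by have := hs.1; positivity
    positivity
  intro u hu hrad x hx hx0
  obtain ⟨e, he⟩ : ∃ e : E N, ‖e‖ = 1 := ⟨EuclideanSpace.single ⟨0, by omega⟩ 1, by simp⟩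
  obtain ⟨hwc, hlr, hode⟩ := radial_ode hN hu.1 hrad he
  obtain ⟨G, hG, hGe⟩ := lap_ext hu.1
  set w : ℝ → ℝ := fun t => u (t • e) with hw
  set F : ℝ → ℝ := fun t => G (t • e) with hFd
  have hF : ContinuousOn F (Icc 0 1) := by
    apply hG.comp (by fun_prop)
    intro t ht
    simp [norm_smul, he, abs_of_nonneg ht.1, ht.2]
  have hwcont : ContinuousOn w (Icc 0 1) := by
    apply hu.1.continuousOn.comp (by fun_prop)
    intro t ht
    simp [norm_smul, he, abs_of_nonneg ht.1, ht.2]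
  have hlF : ∀ t ∈ Ico (0:ℝ) 1, lap u (t • e) = F t := fun t ht =>
    hGe _ (by simp [norm_smul, he, abs_of_nonneg ht.1, ht.2])
  -- the numerator in polar coordinates
  have hnum : ∫ x in ball (0 : E N) 1, ‖x‖ ^ (b * (r - 1)) * |lap u x| ^ r =
      V * ∫ s in Ioo (0:ℝ) 1, s ^ (N-1) * (s ^ (b * (r - 1)) * |F s| ^ r) := by
    rw [hVdef, ← polar hN (fun s => s ^ (b * (r - 1)) * |F s| ^ r)]
    apply integral_congr_ae
    have hne : ∀ᵐ y : E N ∂(volume.restrict (ball (0 : E N) 1)), y ≠ 0 := by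
      have : Nontrivial (E N) := by
        have : NeZero N := ⟨by omega⟩
        infer_instance
      exact ae_restrict_of_ae (Measure.ae_ne volume 0)
    filter_upwards [ae_restrict_mem measurableSet_ball, hne] with y hy hy0
    rw [hlr y hy hy0, hlF _ ⟨norm_nonneg _, by simpa using hy⟩]
  set J := ∫ s in Ioo (0:ℝ) 1, s ^ (N-1) * (s ^ (b * (r - 1)) * |F s| ^ r) with hJ
  set I := ∫ x in ball (0 : E N) 1, ‖x‖ ^ (b * (r - 1)) * |lap u x| ^ r with hI
  have hJ0 : 0 ≤ J := setIntegral_nonneg measurableSet_Ioo fun s hs => by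
    have := hs.1; positivity
  have hJI : J = 1 / V * I := by rw [hnum]; field_simp
  have hI0 : 0 ≤ I := by rw [hnum]; positivity
  have hhol := holder1 hN hb0 hbN hq hr hF
  rw [← hJ] at hhol
  set A := ∫ s in Ioo (0:ℝ) 1, s ^ (N-1) * |F s| with hA
  have hcF : ContinuousOn (fun s => s ^ (N-1) * F s) (Icc 0 1) :=
    (continuousOn_pow _).mul hF
  have hcF' : ContinuousOn (fun s => s ^ (N-1) * |F s|) (Icc 0 1) :=
    (continuousOn_pow _).mul hF.abs
  -- derivative bound
  have hder : ∀ t ∈ Ioo (0:ℝ) 1, t ^ (N-1) * |deriv w t| ≤ A := by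
    intro t ht
    have hdc : ContinuousOn (deriv w) (Icc 0 t) :=
      (hwc.continuousOn_deriv_of_isOpen isOpen_Ioo (by norm_num)).mono
        (fun s hs => ⟨by linarith [hs.1], lt_of_le_of_lt hs.2 ht.2⟩)
    have hsub : Icc 0 t ⊆ Icc (0:ℝ) 1 := Icc_subset_Icc_right ht.2.le
    have := intervalIntegral.integral_eq_sub_of_hasDerivAt_of_le (a := 0) (b := t)
      (f := fun t => t ^ (N-1) * deriv w t) (f' := fun s => s ^ (N-1) * F s) ht.1.le
      ((continuousOn_pow _).mul hdc)
      (fun s hs => by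
        have h := hode s ⟨hs.1, hs.2.trans ht.2⟩
        rw [hlF s ⟨hs.1.le, hs.2.trans ht.2⟩] at h
        exact h)
      (ContinuousOn.intervalIntegrable_of_Icc ht.1.le (hcF.mono hsub))
    have hz : (0:ℝ) ^ (N - 1) = 0 := zero_pow (by omega)
    simp only [hz, zero_mul, sub_zero] at this
    have e1 : t ^ (N-1) * |deriv w t| = |t ^ (N-1) * deriv w t| := by
      rw [abs_mul, abs_of_nonneg (pow_nonneg ht.1.le _)]
    rw [e1, ← this]
    refine (intervalIntegral.abs_integral_le_integral_abs ht.1.le).trans ?_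
    rw [intervalIntegral.integral_of_le ht.1.le, integral_Ioc_eq_integral_Ioo]
    have e2 : ∫ s in Ioo 0 t, |s ^ (N-1) * F s| = ∫ s in Ioo 0 t, s ^ (N-1) * |F s| := by
      refine setIntegral_congr_fun measurableSet_Ioo fun s hs => ?_
      rw [abs_mul, abs_of_nonneg (pow_nonneg hs.1.le _)]
    rw [e2]
    apply setIntegral_mono_set
    · exact (hcF'.integrableOn_Icc).mono_set Ioo_subset_Icc_self
    · filter_upwards [ae_restrict_mem measurableSet_Ioo] with s hs
      have h0 := hs.1
      simp only [Pi.zero_apply]; positivity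
    · exact (Ioo_subset_Ioo_right ht.2.le).eventuallyLE
  -- mean value theorem
  have hx1 : ‖x‖ ∈ Ioo (0:ℝ) 1 := ⟨norm_pos_iff.2 hx0, by simpa using hx⟩
  have hux : u x = w ‖x‖ := hrad _ _ (by simp [norm_smul, he])
  have hw1 : w 1 = 0 := hu.2.1 _ (by simp [he])
  obtain ⟨c, hc, hc'⟩ := exists_deriv_eq_slope w hx1.2
    (hwcont.mono (Icc_subset_Icc_left hx1.1.le))
    (fun s hs => ((hwc.contDiffAt (Ioo_mem_nhds (by linarith [hs.1, hx1.1]) hs.2)).differentiableAt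
      (by norm_num)).differentiableWithinAt)
  have hpos : 0 < 1 - ‖x‖ := by linarith [hx1.2]
  have hux2 : |u x| = |deriv w c| * (1 - ‖x‖) := by
    rw [hc', hw1, hux, abs_div, abs_of_pos hpos, div_mul_cancel₀ _ hpos.ne']; simp
  have hc1 : c ∈ Ioo (0:ℝ) 1 := ⟨hx1.1.trans hc.1, hc.2⟩
  calc |u x| * ‖x‖ ^ (N-1) = (‖x‖ ^ (N-1) * |deriv w c|) * (1 - ‖x‖) := by rw [hux2]; ring
    _ ≤ (c ^ (N-1) * |deriv w c|) * (1 - ‖x‖) := by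
        gcongr; exact hc.1.le
    _ ≤ A * (1 - ‖x‖) := by gcongr; exact hder c hc1
    _ ≤ _ := by
        apply mul_le_mul_of_nonneg_right _ hpos.le
        refine hhol.trans ?_
        have hV1 : 0 ≤ 1 / V := (one_div_pos.2 hV).le
        rw [hJI, Real.mul_rpow hV1 hI0]
        have h3 : 0 ≤ (1 / V) ^ (1 / r) * I ^ (1 / r) :=
          mul_nonneg (Real.rpow_nonneg hV1 _) (Real.rpow_nonneg hI0 _)
        clear_value I V
        linarith

lemma den_pos {N : ℕ} (hN : 3 ≤ N) {u : E N → ℝ} (hu : memD u) {α p : ℝ} (hα : 0 < α) (hp : 1 < p) :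
    0 < ∫ x in ball (0 : E N) 1, ‖x‖ ^ α * |u x| ^ (p + 1) := by
  have hcont : ContinuousOn (fun x : E N => ‖x‖ ^ α * |u x| ^ (p + 1)) (closedBall 0 1) :=
    (continuous_norm.continuousOn.rpow_const (fun _ _ => Or.inr hα.le)).mul
      (hu.1.continuousOn.abs.rpow_const (fun _ _ => Or.inr (by linarith)))
  rw [setIntegral_pos_iff_support_of_nonneg_ae]
  · obtain ⟨x0, hx0, hux0⟩ := hu.2.2
    have hx0b : x0 ∈ ball (0 : E N) 1 := by
      have h1 : ‖x0‖ ≠ 1 := fun h => hux0 (hu.2.1 _ h)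
      have h2 : ‖x0‖ ≤ 1 := by simpa using hx0
      simpa using lt_of_le_of_ne h2 h1
    have hopen : IsOpen (ball (0 : E N) 1 ∩ u ⁻¹' {0}ᶜ) :=
      (hu.1.continuousOn.mono ball_subset_closedBall).isOpen_inter_preimage isOpen_ball
        isOpen_compl_singleton
    have hpos : 0 < volume (ball (0 : E N) 1 ∩ u ⁻¹' {0}ᶜ) :=
      hopen.measure_pos volume ⟨x0, hx0b, hux0⟩
    have : Nontrivial (E N) := by
      have : NeZero N := ⟨by omega⟩
      infer_instance
    have h3 : volume ((ball (0 : E N) 1 ∩ u ⁻¹' {0}ᶜ) \ {0}) = volume (ball (0 : E N) 1 ∩ u ⁻¹' {0}ᶜ) :=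
      measure_sdiff_null (measure_singleton _)
    rw [← h3] at hpos
    refine lt_of_lt_of_le hpos (measure_mono ?_)
    rintro x ⟨⟨hx1, hx2⟩, hx3⟩
    have hxn : 0 < ‖x‖ := norm_pos_iff.2 hx3
    have hxu : 0 < |u x| := abs_pos.2 hx2
    refine ⟨?_, hx1⟩
    have : 0 < ‖x‖ ^ α * |u x| ^ (p + 1) := by positivity
    exact this.ne'
  · exact Eventually.of_forall fun x => by simp only [Pi.zero_apply]; positivity
  · exact (hcont.integrableOn_compact (isCompact_closedBall _ _)).mono_set ball_subset_closedBall

lemma beta_bound {N : ℕ} (hN : 3 ≤ N) {k p : ℝ} (hk : 0 < k) (hp : 1 < p) :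
    ∫ x in ball (0 : E N) 1, Real.exp (-(k * (1 - ‖x‖))) * (1 - ‖x‖) ^ (p + 1) ≤
      (N * volume.real (ball (0 : E N) 1)) * ((1 / k) ^ (p + 2) * Real.Gamma (p + 2)) := by
  rw [polar hN (fun s => Real.exp (-(k * (1 - s))) * (1 - s) ^ (p + 1))]
  apply mul_le_mul_of_nonneg_left _ (by positivity)
  rw [← Real.integral_rpow_mul_exp_neg_mul_Ioi (by linarith) hk]
  have hint : IntegrableOn (fun t : ℝ => t ^ (p + 2 - 1) * Real.exp (-(k * t))) (Ioi 0) := by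
    apply Integrable.of_integral_ne_zero
    rw [Real.integral_rpow_mul_exp_neg_mul_Ioi (by linarith) hk]
    have := Real.Gamma_pos_of_pos (show 0 < p + 2 by linarith)
    positivity
  have hg : Continuous (fun s : ℝ => Real.exp (-(k * (1 - s))) * (1 - s) ^ (p + 1)) := by
    apply Continuous.mul (by fun_prop)
    exact (continuous_const.sub continuous_id).rpow_const (fun _ => Or.inr (by linarith))
  calc ∫ s in Ioo (0:ℝ) 1, s ^ (N - 1) * (Real.exp (-(k * (1 - s))) * (1 - s) ^ (p + 1))
      ≤ ∫ s in Ioo (0:ℝ) 1, (Real.exp (-(k * (1 - s))) * (1 - s) ^ (p + 1)) := by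
        apply setIntegral_mono_on
        · exact (((continuous_pow _).mul hg).continuousOn.integrableOn_Icc).mono_set Ioo_subset_Icc_self
        · exact (hg.continuousOn.integrableOn_Icc).mono_set Ioo_subset_Icc_self
        · exact measurableSet_Ioo
        · intro s hs
          have h1 : 0 < 1 - s := by linarith [hs.2]
          have h2 : s ^ (N-1) ≤ 1 := pow_le_one₀ hs.1.le hs.2.le
          have h3 : 0 ≤ Real.exp (-(k * (1 - s))) * (1 - s) ^ (p + 1) := by positivity
          nlinarith
    _ = ∫ t in Ioo (0:ℝ) 1, t ^ (p + 2 - 1) * Real.exp (-(k * t)) := by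
        rw [← integral_Ioc_eq_integral_Ioo, ← intervalIntegral.integral_of_le zero_le_one,
          ← integral_Ioc_eq_integral_Ioo, ← intervalIntegral.integral_of_le zero_le_one]
        have := intervalIntegral.integral_comp_sub_left (a := 0) (b := 1)
          (fun t : ℝ => t ^ (p + 2 - 1) * Real.exp (-(k * t))) 1
        simp only [sub_self, sub_zero] at this
        rw [← this]
        congr 1
        ext s
        rw [mul_comm, show p + 2 - 1 = p + 1 by ring]
    _ ≤ _ := by
        apply setIntegral_mono_set hint
        · filter_upwards [ae_restrict_mem measurableSet_Ioi] with s hs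
          have h0 : 0 < s := hs
          simp only [Pi.zero_apply]; positivity
        · exact Ioo_subset_Ioi_self.eventuallyLE

lemma rad_lower {N : ℕ} (hN : 3 ≤ N) {β p q r : ℝ}
    (hβ1 : -(N : ℝ) < β) (hβ2 : β < 0) (hp : 1 < p) (hq : 1 < q) (hr : r = (q + 1) / q) :
    ∃ c α₁ : ℝ, 0 < c ∧ 0 < α₁ ∧ ∀ α : ℝ, α₁ ≤ α → ∀ u : E N → ℝ, memD u → radial u →
      c * α ^ ((p + 2) * (r / (p + 1))) ≤ ray2 α β p r u := by
  have hN' : (3:ℝ) ≤ N := by exact_mod_cast hN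
  have hr0 : 0 < r := by rw [hr]; positivity
  obtain ⟨C, hC, hbd⟩ := radial_bound hN (b := -β) (by linarith) (by linarith) hq hr
  have hV : 0 < N * volume.real (ball (0 : E N) 1) := by
    have : 0 < volume.real (ball (0 : E N) 1) := by
      rw [measureReal_def]
      exact ENNReal.toReal_pos (measure_ball_pos _ _ one_pos).ne' measure_ball_lt_top.ne
    have : 0 < (N:ℝ) := by positivity
    positivity
  have hbeta := fun k hk => beta_bound hN (k := k) (p := p) hk hp
  set V := N * volume.real (ball (0 : E N) 1)
  clear_value V
  have hG := Real.Gamma_pos_of_pos (show 0 < p + 2 by linarith)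
  set M := V * (2 ^ (p + 2) * Real.Gamma (p + 2)) with hM
  have hM0 : 0 < M := by positivity
  refine ⟨1 / (C ^ r * M ^ (r / (p + 1))), 2 * ((N - 1) * (p + 1)), by positivity,
    by have : 0 < (N:ℝ) - 1 := by linarith
       positivity, ?_⟩
  intro α hα u hu hrad
  have hNp : 0 < ((N:ℝ) - 1) * (p + 1) := mul_pos (by linarith) (by linarith)
  have hα0 : 0 < α := by linarith
  have hD := den_pos hN hu hα0 hp
  have hpt := hbd u hu hrad
  unfold ray2
  set I := ∫ x in ball (0 : E N) 1, ‖x‖ ^ (-β * (r - 1)) * |lap u x| ^ r with hI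
  have hI0 : 0 ≤ I := setIntegral_nonneg measurableSet_ball fun x _ => by positivity
  have hcont : ContinuousOn (fun x : E N => ‖x‖ ^ α * |u x| ^ (p + 1)) (closedBall 0 1) :=
    (continuous_norm.continuousOn.rpow_const (fun _ _ => Or.inr hα0.le)).mul
      (hu.1.continuousOn.abs.rpow_const (fun _ _ => Or.inr (by linarith)))
  set D := ∫ x in ball (0 : E N) 1, ‖x‖ ^ α * |u x| ^ (p + 1) with hDd
  clear_value I
  set K := C * I ^ (1 / r) with hK
  have hK0 : 0 ≤ K := by positivity
  have hg : Continuous (fun x : E N => Real.exp (-(α / 2 * (1 - ‖x‖))) * (1 - ‖x‖) ^ (p + 1)) := by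
    apply Continuous.mul (by fun_prop)
    exact (continuous_const.sub continuous_norm).rpow_const (fun _ => Or.inr (by linarith))
  have hDle : D ≤ K ^ (p + 1) * (M * α ^ (-(p + 2))) := by
    calc D ≤ ∫ x in ball (0 : E N) 1, K ^ (p + 1) *
          (Real.exp (-(α / 2 * (1 - ‖x‖))) * (1 - ‖x‖) ^ (p + 1)) := by
          apply setIntegral_mono_on
          · exact (hcont.integrableOn_compact (isCompact_closedBall _ _)).mono_set
              ball_subset_closedBall
          · exact ((continuous_const.mul hg).continuousOn.integrableOn_compact
              (isCompact_closedBall _ _)).mono_set ball_subset_closedBall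
          · exact measurableSet_ball
          · intro x hx
            have hx1 : 0 < 1 - ‖x‖ := by
              have : ‖x‖ < 1 := by simpa using hx
              linarith
            by_cases hx0 : x = 0
            · rw [hx0, norm_zero, Real.zero_rpow hα0.ne', zero_mul]
              positivity
            have hxn : 0 < ‖x‖ := norm_pos_iff.2 hx0
            have h1 := hpt x hx hx0
            have hpow : ‖x‖ ^ α = ‖x‖ ^ (α - (N - 1) * (p + 1)) * (‖x‖ ^ (N - 1)) ^ (p + 1) := by
              rw [← Real.rpow_natCast, ← Real.rpow_mul hxn.le, ← Real.rpow_add hxn,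
                Nat.cast_sub (by omega)]
              congr 1
              push_cast; ring
            have hexp : ‖x‖ ^ (α - (N - 1) * (p + 1)) ≤ Real.exp (-(α / 2 * (1 - ‖x‖))) := by
              rw [Real.rpow_def_of_pos hxn]
              apply Real.exp_le_exp.2
              have h2 := Real.log_le_sub_one_of_pos hxn
              have h3 : α / 2 ≤ α - (N - 1) * (p + 1) := by linarith
              nlinarith
            calc ‖x‖ ^ α * |u x| ^ (p + 1)
                = ‖x‖ ^ (α - (N - 1) * (p + 1)) * (|u x| * ‖x‖ ^ (N - 1)) ^ (p + 1) := by
                  rw [hpow, Real.mul_rpow (abs_nonneg _) (by positivity)]; ring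
              _ ≤ Real.exp (-(α / 2 * (1 - ‖x‖))) * (K * (1 - ‖x‖)) ^ (p + 1) := by
                  apply mul_le_mul hexp _ (by positivity) (by positivity)
                  apply Real.rpow_le_rpow (by positivity) h1 (by linarith)
              _ = _ := by rw [Real.mul_rpow hK0 hx1.le]; ring
      _ = K ^ (p + 1) * ∫ x in ball (0 : E N) 1,
          (Real.exp (-(α / 2 * (1 - ‖x‖))) * (1 - ‖x‖) ^ (p + 1)) := integral_const_mul _ _
      _ ≤ K ^ (p + 1) * (V * ((1 / (α / 2)) ^ (p + 2) * Real.Gamma (p + 2))) := by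
          apply mul_le_mul_of_nonneg_left _ (by positivity)
          exact hbeta _ (by positivity)
      _ = _ := by
          rw [hM, show 1 / (α / 2) = 2 * α⁻¹ by field_simp, Real.mul_rpow (x := 2) (by norm_num) (by positivity),
            Real.inv_rpow hα0.le, ← Real.rpow_neg hα0.le]
          ring
  clear_value D M
  have hDr : D ^ (r / (p + 1)) ≤ C ^ r * I * (M ^ (r / (p + 1)) * α ^ (-((p + 2) * (r / (p + 1))))) := by
    refine (Real.rpow_le_rpow hD.le hDle (by positivity)).trans (le_of_eq ?_)
    rw [Real.mul_rpow (by positivity) (by positivity), Real.mul_rpow hM0.le (by positivity),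
      ← Real.rpow_mul hK0, ← Real.rpow_mul hα0.le, hK, Real.mul_rpow hC.le (by positivity),
      ← Real.rpow_mul hI0]
    have e1 : (p + 1) * (r / (p + 1)) = r := by field_simp
    rw [e1, one_div_mul_cancel hr0.ne', Real.rpow_one, neg_mul]
  have hDp : 0 < D ^ (r / (p + 1)) := by positivity
  rw [le_div_iff₀ hDp]
  calc _ ≤ 1 / (C ^ r * M ^ (r / (p + 1))) * α ^ ((p + 2) * (r / (p + 1))) *
        (C ^ r * I * (M ^ (r / (p + 1)) * α ^ (-((p + 2) * (r / (p + 1)))))) := by gcongr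
    _ = I := by
      rw [Real.rpow_neg hα0.le]
      have h1 : 0 < α ^ ((p + 2) * (r / (p + 1))) := by positivity
      have h2 : 0 < C ^ r := by positivity
      have h3 : 0 < M ^ (r / (p + 1)) := by positivity
      field_simp

lemma fderiv_scale {N : ℕ} {g : E N → ℝ} (hg : Differentiable ℝ g) (α : ℝ) (a x v : E N) :
    fderiv ℝ (fun x => g (α • (x - a))) x v = α * fderiv ℝ g (α • (x - a)) v := by
  have h1 : HasFDerivAt (fun x : E N => α • (x - a)) (α • ContinuousLinearMap.id ℝ (E N)) x :=
    ((hasFDerivAt_id x).sub_const a).const_smul α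
  have h2 := (hg (α • (x - a))).hasFDerivAt.comp x h1
  have h3 : HasFDerivAt (fun x => g (α • (x - a))) _ x := h2
  rw [h3.fderiv]
  simp

lemma lap_scale {N : ℕ} {g : E N → ℝ} (hg : ContDiff ℝ 2 g) (α : ℝ) (a x : E N) :
    lap (fun x => g (α • (x - a))) x = α ^ 2 * lap g (α • (x - a)) := by
  unfold lap
  rw [Finset.mul_sum]
  refine Finset.sum_congr rfl fun i _ => ?_
  have h1 : (fun y => fderiv ℝ (fun x => g (α • (x - a))) y (EuclideanSpace.single i 1)) =
      fun y => α * (fun z => fderiv ℝ g z (EuclideanSpace.single i 1)) (α • (y - a)) := by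
    ext y
    exact fderiv_scale (hg.differentiable (by norm_num)) α a y _
  have hd : Differentiable ℝ (fun z => fderiv ℝ g z (EuclideanSpace.single i 1)) := by
    have : ContDiff ℝ 1 (fun z => fderiv ℝ g z (EuclideanSpace.single i 1)) :=
      (hg.fderiv_right (by norm_num)).clm_apply contDiff_const
    exact this.differentiable (by norm_num)
  rw [h1]
  have hd2 : DifferentiableAt ℝ (fun y => (fun z => fderiv ℝ g z (EuclideanSpace.single i 1)) (α • (y - a))) x :=
    (hd _).comp x ((differentiableAt_id.sub_const a).const_smul α)
  rw [fderiv_const_mul hd2]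
  rw [_root_.smul_apply, fderiv_scale hd, smul_eq_mul]
  ring

lemma lap_cont {N : ℕ} {g : E N → ℝ} (hg : ContDiff ℝ 2 g) : Continuous (lap g) := by
  unfold lap
  apply continuous_finsetSum
  intro i _
  have : ContDiff ℝ 1 (fun z => fderiv ℝ g z (EuclideanSpace.single i 1)) :=
      (hg.fderiv_right (by norm_num)).clm_apply contDiff_const
  exact (this.continuous_fderiv (by norm_num)).clm_apply continuous_const

lemma test_upper {N : ℕ} (hN : 3 ≤ N) {β p r : ℝ} (hβ2 : β < 0) (hp : 1 < p) (hr1 : 1 < r) :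
    ∃ C : ℝ, 0 < C ∧ ∀ α : ℝ, 4 ≤ α → ∃ u : E N → ℝ, memD u ∧
      ray2 α β p r u ≤ C * α ^ (2 * r - N + N * (r / (p + 1))) := by
  have : Nontrivial (E N) := by
    have : NeZero N := ⟨by omega⟩
    infer_instance
  obtain ⟨e, he⟩ : ∃ e : E N, ‖e‖ = 1 := ⟨EuclideanSpace.single ⟨0, by omega⟩ 1, by simp⟩
  let φ : ContDiffBump (0 : E N) := ⟨1 / 2, 1, by norm_num, by norm_num⟩
  have hφc : ContDiff ℝ 2 φ := φ.contDiff
  have hφ0 : ∀ x : E N, 1 ≤ ‖x‖ → φ x = 0 := fun x hx => φ.zero_of_le_dist (by simpa using hx)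
  have hφ1 : ∀ x : E N, ‖x‖ ≤ 1 / 2 → φ x = 1 := fun x hx => φ.one_of_mem_closedBall (by
    rw [mem_closedBall, dist_zero_right]; exact hx)
  have hLc := lap_cont hφc
  have hL0 : ∀ x ∉ closedBall (0 : E N) 1, |lap φ x| ^ r = 0 := by
    intro x hx
    have hev : ∀ᶠ y in nhds x, φ y = 0 := by
      filter_upwards [isClosed_closedBall.isOpen_compl.mem_nhds hx] with y hy
      apply hφ0
      have : ¬ ‖y‖ ≤ 1 := by simpa using hy
      linarith
    have : lap φ x = 0 := by
      unfold lap
      refine Finset.sum_eq_zero fun i _ => ?_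
      have h1 : (fun y => fderiv ℝ φ y (EuclideanSpace.single i 1)) =ᶠ[nhds x] fun _ => (0:ℝ) := by
        filter_upwards [hev.eventually_nhds] with y hy
        have : (φ : E N → ℝ) =ᶠ[nhds y] fun _ => (0:ℝ) := hy
        rw [this.fderiv_eq]; simp
      rw [h1.fderiv_eq]; simp
    rw [this, abs_zero, Real.zero_rpow (by linarith)]
  have hLrc : Continuous (fun x => |lap φ x| ^ r) :=
    hLc.abs.rpow_const (fun _ => Or.inr (by linarith))
  have hLi : Integrable (fun x => |lap φ x| ^ r) :=
    hLrc.integrable_of_hasCompactSupport (HasCompactSupport.intro (isCompact_closedBall 0 1) hL0)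
  set A := ∫ x, |lap φ x| ^ r with hA
  have hA0 : 0 ≤ A := integral_nonneg fun x => by positivity
  have hv : 0 < volume.real (ball (0 : E N) 1) := by
    rw [measureReal_def]
    exact ENNReal.toReal_pos (measure_ball_pos _ _ one_pos).ne' measure_ball_lt_top.ne
  set v := volume.real (ball (0 : E N) 1) with hvd
  set m := Real.exp (-4) * (v * (1 / 2) ^ (N:ℝ)) with hm
  have hm0 : 0 < m := by positivity
  have hp0 : 0 < p + 1 := by linarith
  have hr0 : 0 < r := by linarith
  refine ⟨(A + 1) / m ^ (r / (p + 1)), by positivity, ?_⟩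
  intro α hα
  have hα0 : 0 < α := by linarith
  have hia : 1 / α ≤ 1 / 4 := one_div_le_one_div_of_le (by norm_num) hα
  have hia0 : 0 < 1 / α := by positivity
  set a : E N := (1 - 1 / α) • e with ha
  have han : ‖a‖ = 1 - 1 / α := by
    rw [ha, norm_smul, he, mul_one, Real.norm_of_nonneg (by linarith)]
  have hmem : memD (fun x => φ (α • (x - a))) := by
    refine ⟨?_, ?_, ?_⟩
    · apply ContDiff.contDiffOn
      exact hφc.comp ((contDiff_id.sub contDiff_const).const_smul α)
    · intro x hx
      apply hφ0
      rw [norm_smul, Real.norm_of_nonneg hα0.le]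
      have h1 : 1 / α ≤ ‖x - a‖ := by
        have := norm_sub_norm_le x a
        linarith
      calc (1:ℝ) = α * (1 / α) := by field_simp
        _ ≤ _ := by gcongr
    · refine ⟨a, by simp only [mem_closedBall, dist_zero_right]; linarith, ?_⟩
      simp only [sub_self, smul_zero]
      rw [hφ1 0 (by simp)]
      exact one_ne_zero
  refine ⟨_, hmem, ?_⟩
  unfold ray2
  -- numerator
  have hnum : ∫ x in ball (0 : E N) 1, ‖x‖ ^ (-β * (r - 1)) * |lap (fun x => φ (α • (x - a))) x| ^ r
      ≤ α ^ (2 * r - N) * (A + 1) := by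
    have hcs : ∫ x : E N, |lap φ (α • (x - a))| ^ r = α ^ (-(N:ℝ)) * A := by
      rw [integral_sub_right_eq_self (fun x => |lap φ (α • x)| ^ r) a,
        Measure.integral_comp_smul volume (fun x => |lap φ x| ^ r) α]
      rw [Real.rpow_neg hα0.le, Real.rpow_natCast]
      simp [abs_of_pos hα0, hA]
    have hi2 : Integrable (fun x : E N => |lap φ (α • (x - a))| ^ r) :=
      (hLi.comp_smul hα0.ne').comp_sub_right a
    calc _ ≤ ∫ x in ball (0 : E N) 1, α ^ (2 * r) * |lap φ (α • (x - a))| ^ r := by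
          apply integral_mono_of_nonneg
          · exact Eventually.of_forall fun x => by simp only [Pi.zero_apply]; positivity
          · exact (hi2.const_mul _).integrableOn
          · filter_upwards [ae_restrict_mem measurableSet_ball] with x hx
            have hx1 : ‖x‖ ≤ 1 := by
              have : ‖x‖ < 1 := by simpa using hx
              exact this.le
            rw [lap_scale hφc, abs_mul, Real.mul_rpow (abs_nonneg _) (abs_nonneg _),
              abs_of_nonneg (by positivity), ← Real.rpow_natCast α 2, ← Real.rpow_mul hα0.le]
            have h1 : ‖x‖ ^ (-β * (r - 1)) ≤ 1 :=
              Real.rpow_le_one (norm_nonneg _) hx1 (mul_nonneg (by linarith) (by linarith))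
            push_cast
            apply mul_le_of_le_one_left (by positivity) h1
      _ ≤ ∫ x : E N, α ^ (2 * r) * |lap φ (α • (x - a))| ^ r :=
          setIntegral_le_integral (hi2.const_mul _)
            (Eventually.of_forall fun x => by simp only [Pi.zero_apply]; positivity)
      _ = α ^ (2 * r - N) * A := by
          rw [integral_const_mul, hcs, ← mul_assoc, ← Real.rpow_add hα0, sub_eq_add_neg]
      _ ≤ _ := by gcongr; linarith
  -- denominator
  have hden : m * α ^ (-(N:ℝ)) ≤ ∫ x in ball (0 : E N) 1, ‖x‖ ^ α * |φ (α • (x - a))| ^ (p + 1) := by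
    have hsub : ball a (1 / 2 * (1 / α)) ⊆ ball (0 : E N) 1 := by
      intro x hx
      have h1 : ‖x - a‖ < 1 / 2 * (1 / α) := by simpa [dist_eq_norm] using hx
      have h2 := norm_sub_norm_le x a
      simp only [mem_ball, dist_zero_right]
      linarith
    have hci : IntegrableOn (fun x : E N => ‖x‖ ^ α * |φ (α • (x - a))| ^ (p + 1)) (ball 0 1) := by
      have : Continuous (fun x : E N => ‖x‖ ^ α * |φ (α • (x - a))| ^ (p + 1)) := by
        apply (continuous_norm.rpow_const (fun _ => Or.inr hα0.le)).mul
        apply Continuous.rpow_const _ (fun _ => Or.inr (by linarith))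
        exact (φ.continuous.comp ((continuous_id.sub continuous_const).const_smul α)).abs
      exact (this.continuousOn.integrableOn_compact (isCompact_closedBall _ _)).mono_set
        ball_subset_closedBall
    have hvol : volume.real (ball a (1 / 2 * (1 / α))) = v * (1 / 2) ^ (N:ℝ) * α ^ (-(N:ℝ)) := by
      rw [measureReal_def, Measure.addHaar_ball _ _ (by positivity), ENNReal.toReal_mul,
        ENNReal.toReal_ofReal (by positivity), finrank_euclideanSpace_fin, hvd, measureReal_def,
        Real.rpow_neg hα0.le, Real.rpow_natCast, Real.rpow_natCast, mul_pow, one_div α, inv_pow]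
      ring
    calc m * α ^ (-(N:ℝ)) = ∫ x in ball a (1 / 2 * (1 / α)), Real.exp (-4) := by
          rw [setIntegral_const, hvol, hm, smul_eq_mul]; ring
      _ ≤ ∫ x in ball a (1 / 2 * (1 / α)), ‖x‖ ^ α * |φ (α • (x - a))| ^ (p + 1) := by
          apply setIntegral_mono_on
          · exact integrableOn_const measure_ball_lt_top.ne
          · exact hci.mono_set hsub
          · exact measurableSet_ball
          · intro x hx
            have h1 : ‖x - a‖ < 1 / 2 * (1 / α) := by simpa [dist_eq_norm] using hx
            have h2 : ‖a‖ - ‖x‖ ≤ ‖x - a‖ := by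
              rw [norm_sub_rev]; exact norm_sub_norm_le a x
            have h3 : φ (α • (x - a)) = 1 := by
              apply hφ1
              rw [norm_smul, Real.norm_of_nonneg hα0.le]
              calc α * ‖x - a‖ ≤ α * (1 / 2 * (1 / α)) := by gcongr
                _ = 1 / 2 := by field_simp
            rw [h3, abs_one, Real.one_rpow, mul_one]
            have h4 : 1 - 2 * (1 / α) ≤ ‖x‖ := by linarith
            have h5 : 1 / 2 ≤ ‖x‖ := by linarith
            have hx0 : 0 < ‖x‖ := by linarith
            rw [Real.rpow_def_of_pos hx0]
            apply Real.exp_le_exp.2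
            have h6 := Real.one_sub_inv_le_log_of_pos hx0
            have h7 : -4 * (1 / α) ≤ 1 - ‖x‖⁻¹ := by
              have h8 : ‖x‖⁻¹ ≤ 2 := by
                rw [inv_le_comm₀ hx0 (by norm_num)]; linarith
              have h9 : ‖x‖⁻¹ - 1 = ‖x‖⁻¹ * (1 - ‖x‖) := by field_simp
              have h10 : ‖x‖⁻¹ * (1 - ‖x‖) ≤ ‖x‖⁻¹ * (2 * (1 / α)) := by
                gcongr; linarith
              have h11 : ‖x‖⁻¹ * (2 * (1 / α)) ≤ 2 * (2 * (1 / α)) := by gcongr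
              linarith
            calc (-4 : ℝ) = (-4 * (1 / α)) * α := by field_simp
              _ ≤ _ := by gcongr; linarith
      _ ≤ _ := by
          apply setIntegral_mono_set hci
          · exact Eventually.of_forall fun x => by simp only [Pi.zero_apply]; positivity
          · exact hsub.eventuallyLE
  have hmα : 0 < m * α ^ (-(N:ℝ)) := by positivity
  calc _ ≤ α ^ (2 * r - N) * (A + 1) / (m * α ^ (-(N:ℝ))) ^ (r / (p + 1)) := by
        gcongr
    _ = _ := by
        rw [Real.mul_rpow hm0.le (by positivity), ← Real.rpow_mul hα0.le, Real.rpow_add hα0,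
          neg_mul, Real.rpow_neg hα0.le]
        field_simp

/-- Calanchi–Ruf symmetry breaking (mixed Hénon–Hardy case, part (b)): for -N < β < 0
and α large the radial ground-state level exceeds the ground-state level, so no radial
member of 𝒟 attains the infimum. -/
theorem stmt18 {N : ℕ} (hN : 3 ≤ N) (β p q r : ℝ)
    (hβ1 : -(N : ℝ) < β) (hβ2 : β < 0) (hp : 1 < p) (hq : 1 < q)
    (hhyp : (N : ℝ) / (p + 1) + ((N : ℝ) - |β|) / (q + 1) > (N : ℝ) - 2)
    (hpq : p > (N : ℝ) / (((N : ℝ) - 1) * q - 1))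
    (hr : r = (q + 1) / q) :
    ∃ α₀ : ℝ, 0 < α₀ ∧ ∀ α : ℝ, α₀ ≤ α →
      S2 N α β p r < S2rad N α β p r ∧
      ∀ u : E N → ℝ, memD u → radial u → ray2 α β p r u ≠ S2 N α β p r := by
  have hN' : (3:ℝ) ≤ N := by exact_mod_cast hN
  have hq0 : 0 < q := by linarith
  have hr1 : 1 < r := by
    rw [hr, lt_div_iff₀ hq0]; linarith
  obtain ⟨c, α₁, hc, hα₁, hlow⟩ := rad_lower hN hβ1 hβ2 hp hq hr
  obtain ⟨C, hC, hup⟩ := test_upper (β := β) hN hβ2 hp hr1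
  set a := 2 * r - N + N * (r / (p + 1)) with ha
  set b := (p + 2) * (r / (p + 1)) with hb
  have hab : a < b := by
    have h1 : 0 < ((N:ℝ) - 1) * q - 1 := by nlinarith
    rw [gt_iff_lt, div_lt_iff₀ h1] at hpq
    have h2 : b - a = ((p * (((N:ℝ) - 1) * q - 1)) - N) / (q * (p + 1)) := by
      rw [ha, hb, hr]
      field_simp
      ring
    have h3 : 0 < ((p * (((N:ℝ) - 1) * q - 1)) - N) / (q * (p + 1)) := by
      apply div_pos (by linarith) (by positivity)
    linarith
  have htend := tendsto_rpow_atTop (show 0 < b - a by linarith)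
  obtain ⟨α₂, hα₂⟩ := Filter.eventually_atTop.1 (htend.eventually_gt_atTop (C / c))
  refine ⟨max α₁ (max 4 α₂), lt_max_of_lt_left hα₁, ?_⟩
  intro α hα
  have k1 : α₁ ≤ α := (le_max_left _ _).trans hα
  have k2 : 4 ≤ α := ((le_max_left _ _).trans (le_max_right _ _)).trans hα
  have k3 : α₂ ≤ α := ((le_max_right _ _).trans (le_max_right _ _)).trans hα
  have hα0 : 0 < α := by linarith
  have hbdd : BddBelow {c | ∃ u : E N → ℝ, memD u ∧ ray2 α β p r u = c} := by
    refine ⟨0, ?_⟩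
    rintro _ ⟨u, _, rfl⟩
    unfold ray2
    apply div_nonneg
    · exact setIntegral_nonneg measurableSet_ball fun x _ => by positivity
    · apply Real.rpow_nonneg
      exact setIntegral_nonneg measurableSet_ball fun x _ => by positivity
  have hbdd2 : BddBelow {c | ∃ u : E N → ℝ, memD u ∧ radial u ∧ ray2 α β p r u = c} :=
    hbdd.mono (by rintro _ ⟨u, h1, _, h2⟩; exact ⟨u, h1, h2⟩)
  have hne : {c | ∃ u : E N → ℝ, memD u ∧ radial u ∧ ray2 α β p r u = c}.Nonempty := by
    refine ⟨_, fun x => 1 - ‖x‖ ^ 2, ⟨?_, ?_, 0, by simp, by simp⟩, ?_, rfl⟩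
    · exact (contDiff_const.sub (contDiff_norm_sq ℝ)).contDiffOn
    · intro x hx; simp [hx]
    · intro x y hxy; simp [hxy]
  have hlt : S2 N α β p r < S2rad N α β p r := by
    obtain ⟨u, hu, hur⟩ := hup α k2
    have h1 : S2 N α β p r ≤ C * α ^ a := (csInf_le hbdd ⟨u, hu, rfl⟩).trans hur
    have h2 : c * α ^ b ≤ S2rad N α β p r := by
      apply le_csInf hne
      rintro _ ⟨u, hu, hrad, rfl⟩
      exact hlow α k1 u hu hrad
    have h3 := hα₂ α k3
    rw [div_lt_iff₀ hc] at h3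
    have h4 : α ^ b = α ^ (b - a) * α ^ a := by
      rw [← Real.rpow_add hα0]; congr 1; ring
    have h5 : 0 < α ^ a := by positivity
    have h6 : C * α ^ a < c * α ^ b := by
      rw [h4]
      calc C * α ^ a < (α ^ (b - a) * c) * α ^ a := by gcongr
        _ = _ := by ring
    linarith
  refine ⟨hlt, ?_⟩
  intro u hu hrad heq
  have : S2rad N α β p r ≤ ray2 α β p r u := csInf_le hbdd2 ⟨u, hu, hrad, rfl⟩
  linarith
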